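/- Let V be a finite-dimensional complex inner product space, let S be a family of pairwise commuting self-adjoint endomorphisms of V, and let V = U₋₁ ⊇ U₀ ⊇ U₁ ⊇ … ⊇ U_N = {0} be a descending chain of subspaces each of which is invariant under every operator in S. Let d ∈ V be a nonzero simultaneous eigenvector of all operators in S that spans its full simultaneous eigenspace (every simultaneous eigenvector with the same system of eigenvalues is a scalar multiple of d). Let v be the unique index with d ∈ U_v and d ∉ U_{v+1}. Then d ∈ (U_{v+1})^⊥ and d ∉ (U_v)^⊥; that is, setting W_n = (U_n)^⊥ and letting w be the minimal index with d ∈ W_w, one has w = v + 1. -/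

import Mathlib

/-! The orthogonal projection onto an invariant subspace of a symmetric operator commutes with that
operator, so it preserves simultaneous eigenspaces. On a one-dimensional one it acts as a scalar: if
the scalar is zero the line is orthogonal to the subspace, otherwise the line lies in it. -/

section

open Module.End

variable {𝕜 E : Type*} [RCLike 𝕜] [NormedAddCommGroup E] [InnerProductSpace 𝕜 E]
  {W : Submodule 𝕜 E} [W.HasOrthogonalProjection]

theorem commute_starProjection_iff_mem_invtSubmodule {T : E →ₗ[𝕜] E} (hT : T.IsSymmetric) :
    Commute (W.starProjection : E →ₗ[𝕜] E) T ↔ W ∈ invtSubmodule T := by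
  have hidem : IsIdempotentElem (W.starProjection : E →ₗ[𝕜] E) :=
    ContinuousLinearMap.isIdempotentElem_toLinearMap_iff.mpr W.isIdempotentElem_starProjection
  rw [LinearMap.IsIdempotentElem.commute_iff hidem, W.range_starProjection, W.ker_starProjection]
  exact and_iff_left_of_imp hT.orthogonalComplement_mem_invtSubmodule

theorem starProjection_mem_eigenspace {T : E →ₗ[𝕜] E} (hT : T.IsSymmetric)
    (hW : W ∈ invtSubmodule T) {μ : 𝕜} {x : E} (hx : x ∈ eigenspace T μ) :
    W.starProjection x ∈ eigenspace T μ := by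
  have hcomm := (commute_starProjection_iff_mem_invtSubmodule hT).mpr hW
  exact mapsTo_genEigenspace_of_comm hcomm.symm μ 1 hx

theorem mem_orthogonal_iff_notMem_of_starProjection_eq_smul {d : E} (hd : d ≠ 0) {a : 𝕜}
    (ha : W.starProjection d = a • d) : d ∈ Wᗮ ↔ d ∉ W := by
  constructor
  · exact fun hdW' hdW ↦ hd (W.orthogonal_disjoint.le_bot ⟨hdW, hdW'⟩)
  · intro hdW
    have had : a • d ∈ W := ha ▸ W.starProjection_apply_mem d
    have ha0 : a = 0 := by_contra fun hne ↦ hdW ((W.smul_mem_iff hne).mp had)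
    rw [← W.starProjection_apply_eq_zero_iff, ha, ha0, zero_smul]

theorem simultaneous_eigenvector_filtration_shift_general {S : Set (E →ₗ[𝕜] E)}
    (hS : ∀ T ∈ S, T.IsSymmetric) (hW : ∀ T ∈ S, W ∈ invtSubmodule T)
    {d : E} (hd : d ≠ 0) {c : (E →ₗ[𝕜] E) → 𝕜} (heig : ∀ T ∈ S, T d = c T • d)
    (hfull : ∀ x : E, (∀ T ∈ S, T x = c T • x) → ∃ a : 𝕜, x = a • d) :
    d ∈ Wᗮ ↔ d ∉ W := by
  have hproj : ∀ T ∈ S, T (W.starProjection d) = c T • W.starProjection d := fun T hT ↦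
    mem_eigenspace_iff.mp <|
      starProjection_mem_eigenspace (hS T hT) (hW T hT) (mem_eigenspace_iff.mpr (heig T hT))
  obtain ⟨a, ha⟩ := hfull _ hproj
  exact mem_orthogonal_iff_notMem_of_starProjection_eq_smul hd ha

end

/-- Let `V` be a finite-dimensional complex inner product space, `S` a family of
pairwise commuting self-adjoint endomorphisms of `V`, and
`V = U 0 ⊇ U 1 ⊇ … ⊇ U (N+1) = 0` a descending chain of subspaces, each invariant
under every operator in `S` (here `U (n+1)` plays the role of the paper's `U_n`,
so the chain is `U₋₁ ⊇ U₀ ⊇ … ⊇ U_N`). Let `d ≠ 0` be a simultaneous eigenvector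
of all operators in `S` spanning its full simultaneous eigenspace, and let `v` be
the index with `d ∈ U v`, `d ∉ U (v+1)`. Then `d ∈ (U (v+1))ᗮ` and `d ∉ (U v)ᗮ`;
i.e. the minimal index `w` with `d ∈ (U w)ᗮ` is `v + 1`. -/
theorem simultaneous_eigenvector_filtration_shift
    {V : Type*} [NormedAddCommGroup V] [InnerProductSpace ℂ V] [FiniteDimensional ℂ V]
    (S : Set (V →ₗ[ℂ] V))
    (hcomm : ∀ T ∈ S, ∀ T' ∈ S, T ∘ₗ T' = T' ∘ₗ T)
    (hsa : ∀ T ∈ S, LinearMap.IsSymmetric T)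
    (N : ℕ) (U : ℕ → Submodule ℂ V)
    (htop : U 0 = ⊤) (hbot : U (N + 1) = ⊥)
    (hchain : ∀ n, U (n + 1) ≤ U n)
    (hinv : ∀ n, ∀ T ∈ S, ∀ x ∈ U n, T x ∈ U n)
    (d : V) (hd : d ≠ 0) (c : (V →ₗ[ℂ] V) → ℂ)
    (heig : ∀ T ∈ S, T d = c T • d)
    (hfull : ∀ x : V, (∀ T ∈ S, T x = c T • x) → ∃ a : ℂ, x = a • d)
    (v : ℕ) (hv : d ∈ U v) (hv' : d ∉ U (v + 1)) :
    d ∈ (U (v + 1))ᗮ ∧ d ∉ (U v)ᗮ := by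
  have hiff n := simultaneous_eigenvector_filtration_shift_general hsa (hinv n) hd heig hfull
  exact ⟨(hiff (v + 1)).mpr hv', fun h ↦ (hiff v).mp h hv⟩
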